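/- Let X be a path-connected topological space with basepoint x₀. There is a bijection between the set of (free) homotopy classes of continuous maps S¹ → X and the set of conjugacy classes of the fundamental group π₁(X, x₀), i.e., the set of orbits of the action of π₁(X, x₀) on itself by conjugation. -/

import Mathlib

/-- The setoid of free homotopy of continuous maps `S¹ → X`. -/
def freeHomotopySetoid (X : Type*) [TopologicalSpace X] : Setoid C(Circle, X) :=
  ⟨ContinuousMap.Homotopic, ContinuousMap.Homotopic.equivalence⟩

/-!
A loop at `x` is the same thing as a map `S¹ → X` sending `1` to `x`. During a free homotopy the
image of `1` traces a path `δ`, and the homotopy, read as a square with both vertical sides equal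
to `δ`, says that `p · δ` and `δ · q` are homotopic rel endpoints, where `p` and `q` are the loops
at its two ends. Conversely `δ · (q · δ⁻¹)` can be shrunk freely to `q` by retracting the tail `δ`
along itself. For `δ` a loop this is conjugacy in `π₁(X, x₀)`, and for `δ` a path from `x₀` to the
value at `1` of a given map `S¹ → X` it shows that this map comes from a loop at `x₀`.
-/

open scoped unitInterval

theorem loop_extend_fract {X : Type*} [TopologicalSpace X] {x : X} (γ : Path x x) (t : I) :
    γ.extend (Int.fract (t : ℝ)) = γ t := by
  rcases t.2.2.eq_or_lt with t_eq_one | t_lt_one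
  · obtain rfl : t = 1 := Subtype.ext t_eq_one
    simp
  · rw [Int.fract_eq_self.2 ⟨t.2.1, t_lt_one⟩, Path.extend_apply]

/-- The loop running once counterclockwise around the circle, as a quotient map from the unit
interval onto `Circle`. -/
noncomputable def circleLoop : Path (1 : Circle) 1 where
  toFun t := Circle.exp (2 * Real.pi * t)
  source' := by simp
  target' := by simp

namespace circleLoop

variable {X : Type*} [TopologicalSpace X] {x y : X}

theorem apply_eq_apply_iff {s t : I} :
    circleLoop s = circleLoop t ↔ Int.fract (s : ℝ) = Int.fract (t : ℝ) := by
  have period_ne_zero : 2 * Real.pi ≠ 0 := Real.two_pi_pos.ne'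
  change Circle.exp (2 * Real.pi * s) = Circle.exp (2 * Real.pi * t) ↔ _
  rw [Circle.exp_eq_exp, Int.fract_eq_fract]
  refine exists_congr fun m ↦ ?_
  rw [sub_eq_iff_eq_add', mul_comm (m : ℝ), ← mul_add, mul_right_inj' period_ne_zero]

protected theorem surjective : Function.Surjective circleLoop := by
  intro z
  obtain ⟨θ, rfl⟩ := Circle.exp_surjective z
  refine ⟨⟨Int.fract (θ / (2 * Real.pi)), unitInterval.fract_mem _⟩, ?_⟩
  refine Circle.exp_eq_exp.2 ⟨-⌊θ / (2 * Real.pi)⌋, ?_⟩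
  simp only [Int.fract]
  push_cast
  field_simp
  ring

theorem isProperMap : IsProperMap circleLoop :=
  circleLoop.continuous.isProperMap

theorem isQuotientMap : Topology.IsQuotientMap circleLoop.toContinuousMap :=
  isProperMap.isClosedMap.isQuotientMap circleLoop.continuous circleLoop.surjective

theorem isQuotientMap_prodMap_id (Y : Type*) [TopologicalSpace Y] :
    Topology.IsQuotientMap (Prod.map id circleLoop : Y × I → Y × Circle) :=
  (isProperMap_id.prodMap isProperMap).isClosedMap.isQuotientMap
    (by fun_prop) (Function.surjective_id.prodMap circleLoop.surjective)

theorem factorsThrough (γ : Path x x) : Function.FactorsThrough γ circleLoop := fun s t h ↦ by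
  rw [← loop_extend_fract γ s, ← loop_extend_fract γ t, apply_eq_apply_iff.1 h]

/-- The map `S¹ → X` induced by a loop in `X`, i.e. its factorization through `circleLoop`. -/
noncomputable def lift (γ : Path x x) : C(Circle, X) :=
  isQuotientMap.lift γ.toContinuousMap (factorsThrough γ)

@[simp]
theorem lift_apply (γ : Path x x) (t : I) : lift γ (circleLoop t) = γ t :=
  DFunLike.congr_fun (isQuotientMap.lift_comp γ.toContinuousMap (factorsThrough γ)) t

theorem lift_map (f : C(Circle, X)) : lift (circleLoop.map f.continuous) = f := by
  ext z
  obtain ⟨t, rfl⟩ := circleLoop.surjective z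
  exact lift_apply _ t

theorem lift_one (γ : Path x x) : lift γ 1 = x := by
  simpa only [Path.source] using lift_apply γ 0

theorem map_lift (γ : Path x x) :
    circleLoop.map (lift γ).continuous = γ.cast (lift_one γ) (lift_one γ) := by
  ext t
  exact lift_apply γ t

theorem continuous_lift_family {Y : Type*} [TopologicalSpace Y] {a : Y → X}
    (Γ : ∀ y, Path (a y) (a y)) (hΓ : Continuous ↿Γ) :
    Continuous fun z : Y × Circle ↦ lift (Γ z.1) z.2 := by
  rw [(isQuotientMap_prodMap_id Y).continuous_iff]
  exact hΓ.congr fun z ↦ (lift_apply (Γ z.1) z.2).symm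

theorem lift_homotopic_of_continuous_family {a : I → X} (Γ : ∀ s, Path (a s) (a s))
    (hΓ : Continuous ↿Γ) : (lift (Γ 0)).Homotopic (lift (Γ 1)) :=
  ⟨{  toFun := fun z ↦ lift (Γ z.1) z.2
      continuous_toFun := continuous_lift_family Γ hΓ
      map_zero_left := fun _ ↦ rfl
      map_one_left := fun _ ↦ rfl }⟩

theorem lift_homotopic_lift {p q : Path x x} (h : p.Homotopic q) :
    (lift p).Homotopic (lift q) := by
  obtain ⟨H⟩ := h
  simpa only [H.eval_zero, H.eval_one] using
    lift_homotopic_of_continuous_family H.eval H.continuous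

theorem lift_conj_cast {x' : X} (δ : Path x y) (q : Path y y) (h : x' = x) :
    lift ((δ.cast h rfl).trans (q.trans (δ.cast h rfl).symm)) =
      lift (δ.trans (q.trans δ.symm)) := by
  subst h
  rfl

theorem lift_conj_homotopic (δ : Path x y) (q : Path y y) :
    (lift (δ.trans (q.trans δ.symm))).Homotopic (lift q) := by
  let tail (s : I) : Path (δ s) y := (δ.subpath s 1).cast rfl δ.target.symm
  have continuous_tail : Continuous ↿tail :=
    δ.subpath_continuous_family.comp (f := fun z : I × I ↦ (z.1, 1, z.2)) (by fun_prop)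
  have continuous_conj : Continuous ↿fun s ↦ (tail s).trans (q.trans (tail s).symm) :=
    Path.trans_continuous_family _ continuous_tail _ <|
      Path.trans_continuous_family _ (q.continuous.comp continuous_snd) _ <|
        Path.symm_continuous_family _ continuous_tail
  have tail_zero : tail 0 = δ.cast δ.source rfl := by ext t; simp [tail]
  have tail_one : tail 1 = (Path.refl y).cast δ.target rfl := by ext t; simp [tail]
  have shrink : (lift (δ.trans (q.trans δ.symm))).Homotopic
      (lift ((Path.refl y).trans (q.trans (Path.refl y)))) := by
    simpa only [tail_zero, tail_one, lift_conj_cast, Path.refl_symm] using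
      lift_homotopic_of_continuous_family _ continuous_conj
  exact shrink.trans <| lift_homotopic_lift <|
    (Path.Homotopic.refl_trans _).trans (Path.Homotopic.trans_refl q)

theorem exists_trans_homotopic_trans {p : Path x x} {q : Path y y}
    (h : (lift p).Homotopic (lift q)) : ∃ δ : Path x y, (p.trans δ).Homotopic (δ.trans q) := by
  obtain ⟨H⟩ := h
  have square := Path.Homotopic.map_trans_evalAt H circleLoop
  rw [map_lift, map_lift] at square
  exact ⟨(H.evalAt 1).cast (lift_one p).symm (lift_one q).symm,
    square.pathCast (lift_one p).symm (lift_one q).symm⟩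

theorem lift_homotopic_lift_iff {p : Path x x} {q : Path y y} :
    (lift p).Homotopic (lift q) ↔ ∃ δ : Path x y, (p.trans δ).Homotopic (δ.trans q) := by
  refine ⟨exists_trans_homotopic_trans, fun ⟨δ, hδ⟩ ↦ ?_⟩
  have p_homotopic_conj : p.Homotopic (δ.trans (q.trans δ.symm)) := by
    rw [← Path.Homotopic.Quotient.eq] at hδ ⊢
    simp only [Path.Homotopic.Quotient.mk_trans, Path.Homotopic.Quotient.mk_symm] at hδ ⊢
    rw [← Path.Homotopic.Quotient.trans_assoc, ← hδ, Path.Homotopic.Quotient.trans_assoc,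
      Path.Homotopic.Quotient.trans_symm, Path.Homotopic.Quotient.trans_refl]
  exact (lift_homotopic_lift p_homotopic_conj).trans (lift_conj_homotopic δ q)

end circleLoop

section FundamentalGroup

variable {X : Type*} [TopologicalSpace X]

/-- The free homotopy class of the maps `S¹ → X` induced by the loops representing an element of
the fundamental group. -/
noncomputable def freeHomotopyClass (x₀ : X) :
    FundamentalGroup X x₀ → Quotient (freeHomotopySetoid X) :=
  Quotient.map' (s₂ := freeHomotopySetoid X) circleLoop.lift
    fun _ _ h ↦ circleLoop.lift_homotopic_lift h

theorem freeHomotopyClass_eq_iff_isConj {x₀ : X} {a b : FundamentalGroup X x₀} :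
    freeHomotopyClass x₀ a = freeHomotopyClass x₀ b ↔ IsConj a b := by
  obtain ⟨p, rfl⟩ := Path.Homotopic.Quotient.mk_surjective a
  obtain ⟨q, rfl⟩ := Path.Homotopic.Quotient.mk_surjective b
  calc
    _ ↔ (circleLoop.lift p).Homotopic (circleLoop.lift q) :=
      Quotient.eq (r := freeHomotopySetoid X)
    _ ↔ ∃ δ : Path x₀ x₀, (p.trans δ).Homotopic (δ.trans q) := circleLoop.lift_homotopic_lift_iff
    _ ↔ ∃ δ : Path x₀ x₀, Path.Homotopic.Quotient.mk (p.trans δ) =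
          Path.Homotopic.Quotient.mk (δ.trans q) := by simp only [Path.Homotopic.Quotient.eq]
    _ ↔ ∃ c : FundamentalGroup X x₀, c * .mk p = .mk q * c :=
      (Path.Homotopic.Quotient.mk_surjective.exists
        (p := fun c : FundamentalGroup X x₀ ↦ c * .mk p = .mk q * c)).symm
    _ ↔ _ := by simp only [isConj_iff, mul_inv_eq_iff_eq_mul]

theorem freeHomotopyClass_surjective [PathConnectedSpace X] (x₀ : X) :
    Function.Surjective (freeHomotopyClass x₀) := by
  intro c
  obtain ⟨f, rfl⟩ := Quotient.exists_rep c
  let δ : Path x₀ (f 1) := PathConnectedSpace.somePath x₀ (f 1)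
  let q : Path (f 1) (f 1) := circleLoop.map f.continuous
  refine ⟨Path.Homotopic.Quotient.mk (δ.trans (q.trans δ.symm)), ?_⟩
  have conj_homotopic : (circleLoop.lift (δ.trans (q.trans δ.symm))).Homotopic f := by
    simpa only [q, circleLoop.lift_map] using circleLoop.lift_conj_homotopic δ q
  exact Quotient.sound (s := freeHomotopySetoid X) conj_homotopic

end FundamentalGroup

/-- For a path-connected space `X` with basepoint `x₀`, the set of free homotopy classes
of continuous maps `S¹ → X` is in bijection with the set of conjugacy classes of the
fundamental group `π₁(X, x₀)`. -/
theorem freeHomotopyClasses_equiv_conjClasses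
    (X : Type*) [TopologicalSpace X] [PathConnectedSpace X] (x₀ : X) :
    Nonempty (Quotient (freeHomotopySetoid X) ≃ ConjClasses (FundamentalGroup X x₀)) := by
  have conjClasses_equiv_ker : ConjClasses (FundamentalGroup X x₀) ≃
      Quotient (Setoid.ker (freeHomotopyClass x₀)) :=
    Quotient.congrRight fun _ _ ↦ freeHomotopyClass_eq_iff_isConj.symm
  have ker_equiv_freeClasses : Quotient (Setoid.ker (freeHomotopyClass x₀)) ≃
      Quotient (freeHomotopySetoid X) :=
    Setoid.quotientKerEquivOfSurjective _ (freeHomotopyClass_surjective x₀)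
  exact ⟨(conjClasses_equiv_ker.trans ker_equiv_freeClasses).symm⟩
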